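/- Let 0 < α ≤ 1 and β ≥ α be real numbers. Then the function f(x) = E_{α,β}(−x) is completely monotone on (0, ∞): f is infinitely differentiable on (0, ∞) and for every integer j ≥ 0 and every x > 0, (−1)^j · f^{(j)}(x) ≥ 0 (where f^{(j)} denotes the j-th derivative). -/

import Mathlib

/-!
For `0 ≤ α ≤ 1` and `y ≥ 0`, the formal power series `y + (1 - X)^α` has positive constant term and
nonpositive other coefficients, so division by it preserves nonnegativity of coefficients. Expanding
`(1 - X)^(α - β) / (y + (1 - X)^α)^(j + 1)` in powers of `y` therefore gives, for `0 ≤ y < 1`,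

  `∑ₖ (k + j).choose j * multichoose (α (k + j) + β) n * (-y)ᵏ ≥ 0`.

Put `y = x / n^α`. By Euler's limit formula, `n^(1 - a) * multichoose a n → 1 / Γ(a)`, so after
rescaling, the limit `n → ∞` of this inequality says that the `j`-th derivative of `E_{α,β}` is
nonnegative at `-x`. The limit passes through the sum because `n ↦ GammaSeq a n` is increasing, so
the terms are dominated by those of a single sufficiently large index.
-/

open Filter Topology PowerSeries
open Finset.HasAntidiagonal (antidiagonal)
open scoped Nat

section EntireSeries

/-- Coefficients of the Hasse derivative `(1 / j!) dʲ/dxʲ` of the power series `∑ c k xᵏ`, which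
avoid the factorials in those of the iterated derivative. -/
def hasseDerivCoeff {R : Type*} [Semiring R] (j : ℕ) (c : ℕ → R) (k : ℕ) : R :=
  ((k + j).choose j : R) * c (k + j)

lemma summable_norm_hasseDerivCoeff_mul_pow {R : Type*} [NormedRing R] {c : ℕ → R} {r : ℝ}
    (hc : Summable fun k ↦ ‖c k‖ * (2 * (|r| + 1)) ^ k) (j : ℕ) :
    Summable fun k ↦ ‖hasseDerivCoeff j c k‖ * r ^ k := by
  have hshift := (summable_nat_add_iff j).2 hc
  refine .of_norm_bounded hshift fun k ↦ ?_
  have hchoose : ‖hasseDerivCoeff j c k‖ ≤ 2 ^ (k + j) * ‖c (k + j)‖ := by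
    rw [hasseDerivCoeff, ← nsmul_eq_mul]
    refine (norm_nsmul_le ..).trans ?_
    gcongr
    exact_mod_cast Nat.choose_le_two_pow _ _
  have hpow : |r| ^ k ≤ (|r| + 1) ^ (k + j) :=
    (pow_le_pow_left₀ (abs_nonneg r) (by linarith) k).trans
      (pow_le_pow_right₀ (by linarith [abs_nonneg r]) (Nat.le_add_right k j))
  calc ‖‖hasseDerivCoeff j c k‖ * r ^ k‖ = ‖hasseDerivCoeff j c k‖ * |r| ^ k := by simp
    _ ≤ 2 ^ (k + j) * ‖c (k + j)‖ * (|r| + 1) ^ (k + j) := by gcongr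
    _ = ‖c (k + j)‖ * (2 * (|r| + 1)) ^ (k + j) := by rw [mul_pow]; ring

lemma hasseDerivCoeff_one_hasseDerivCoeff {R : Type*} [Semiring R] (j : ℕ) (c : ℕ → R) :
    hasseDerivCoeff 1 (hasseDerivCoeff j c) = (j + 1 : R) • hasseDerivCoeff (j + 1) c := by
  funext k
  have hchoose : (k + 1) * (k + 1 + j).choose j = (j + 1) * (k + (j + 1)).choose (j + 1) := by
    rw [show k + (j + 1) = k + 1 + j by ring, mul_comm (j + 1), Nat.choose_succ_right_eq,
      Nat.add_sub_cancel, mul_comm]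
  simp only [hasseDerivCoeff, Nat.choose_one_right, Pi.smul_apply, smul_eq_mul, ← mul_assoc,
    show k + 1 + j = k + (j + 1) by ring] at hchoose ⊢
  exact_mod_cast congrArg (fun m : ℕ ↦ (m : R) * c (k + (j + 1))) hchoose

variable {𝕜 : Type*} [RCLike 𝕜] {c : ℕ → 𝕜}

lemma hasDerivAt_tsum_mul_pow (hc : ∀ r : ℝ, Summable fun k ↦ ‖c k‖ * r ^ k) (x : 𝕜) :
    HasDerivAt (fun x ↦ ∑' k, c k * x ^ k) (∑' k, hasseDerivCoeff 1 c k * x ^ k) x := by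
  set R : ℝ := ‖x‖ + 1
  have hR : 0 < R := by positivity
  have hsucc (k : ℕ) (y : 𝕜) :
      c (k + 1) * (((k + 1 : ℕ) : 𝕜) * y ^ k) = hasseDerivCoeff 1 c k * y ^ k := by
    rw [hasseDerivCoeff, Nat.choose_one_right]; ring
  have hbound : Summable fun k : ℕ ↦ ‖c k‖ * (k * R ^ (k - 1)) := by
    rw [← summable_nat_add_iff 1]
    refine (summable_norm_hasseDerivCoeff_mul_pow (r := R) (hc _) 1).congr fun k ↦ ?_
    simp only [hasseDerivCoeff, Nat.choose_one_right, norm_mul, RCLike.norm_natCast,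
      Nat.add_sub_cancel]
    ring
  have hnorm (k : ℕ) (y : 𝕜) (hy : y ∈ Metric.ball (0 : 𝕜) R) :
      ‖c k * (k * y ^ (k - 1))‖ ≤ ‖c k‖ * (k * R ^ (k - 1)) := by
    have hyR : ‖y‖ ≤ R := (mem_ball_zero_iff.1 hy).le
    simp only [norm_mul, norm_pow, RCLike.norm_natCast]
    gcongr
  have hx : x ∈ Metric.ball (0 : 𝕜) R := by simp [R]
  have hderiv := hasDerivAt_tsum_of_isPreconnected hbound Metric.isOpen_ball
    (convex_ball (0 : 𝕜) R).isPreconnected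
    (fun k y _ ↦ (hasDerivAt_pow k y).const_mul (c k)) hnorm (Metric.mem_ball_self hR)
    (.of_norm_bounded (hc 0) fun k ↦ by simp) hx
  have hsummable : Summable fun k : ℕ ↦ c k * (k * x ^ (k - 1)) :=
    .of_norm_bounded hbound fun k ↦ hnorm k x hx
  rw [hsummable.tsum_eq_zero_add] at hderiv
  simpa only [Nat.cast_zero, zero_mul, mul_zero, zero_add, Nat.add_sub_cancel, hsucc] using hderiv

lemma hasDerivAt_tsum_hasseDerivCoeff_mul_pow (hc : ∀ r : ℝ, Summable fun k ↦ ‖c k‖ * r ^ k)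
    (j : ℕ) (x : 𝕜) :
    HasDerivAt (fun x ↦ ∑' k, hasseDerivCoeff j c k * x ^ k)
      ((j + 1) * ∑' k, hasseDerivCoeff (j + 1) c k * x ^ k) x := by
  have hderiv := hasDerivAt_tsum_mul_pow
    (fun r ↦ summable_norm_hasseDerivCoeff_mul_pow (hc _) j) x
  simpa only [hasseDerivCoeff_one_hasseDerivCoeff, Pi.smul_apply, smul_eq_mul, mul_assoc,
    tsum_mul_left] using hderiv

lemma iteratedDeriv_tsum_mul_pow (hc : ∀ r : ℝ, Summable fun k ↦ ‖c k‖ * r ^ k) (j : ℕ) :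
    iteratedDeriv j (fun x ↦ ∑' k, c k * x ^ k) =
      fun x ↦ (j ! : 𝕜) * ∑' k, hasseDerivCoeff j c k * x ^ k := by
  induction j with
  | zero => simp [hasseDerivCoeff]
  | succ j ih =>
    funext x
    rw [iteratedDeriv_succ, ih,
      ((hasDerivAt_tsum_hasseDerivCoeff_mul_pow hc j x).const_mul _).deriv, Nat.factorial_succ]
    push_cast
    ring

lemma contDiff_tsum_mul_pow (hc : ∀ r : ℝ, Summable fun k ↦ ‖c k‖ * r ^ k) :
    ContDiff 𝕜 (⊤ : ℕ∞) fun x ↦ ∑' k, c k * x ^ k := by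
  refine contDiff_of_differentiable_iteratedDeriv fun j _ x ↦ ?_
  rw [iteratedDeriv_tsum_mul_pow hc]
  exact ((hasDerivAt_tsum_hasseDerivCoeff_mul_pow hc j x).const_mul _).differentiableAt

lemma tendsto_tsum_hasseDerivCoeff_mul_pow {ι : Type*} {l : Filter ι} {C : ι → ℕ → 𝕜} {u : ℕ → ℝ}
    {x : 𝕜} (hu : Summable fun k ↦ ‖u k‖ * (2 * (‖x‖ + 1)) ^ k)
    (hlim : ∀ k, Tendsto (C · k) l (𝓝 (c k))) (hle : ∀ᶠ i in l, ∀ k, ‖C i k‖ ≤ u k) (j : ℕ) :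
    Tendsto (fun i ↦ ∑' k, hasseDerivCoeff j (C i) k * x ^ k) l
      (𝓝 (∑' k, hasseDerivCoeff j c k * x ^ k)) := by
  rw [← abs_norm x] at hu
  refine tendsto_tsum_of_dominated_convergence (summable_norm_hasseDerivCoeff_mul_pow hu j)
    (fun k ↦ ((hlim (k + j)).const_mul _).mul_const _) ?_
  filter_upwards [hle] with i hi k
  simp only [hasseDerivCoeff, norm_mul, norm_pow, RCLike.norm_natCast]
  gcongr
  exact (hi _).trans (le_abs_self _)

end EntireSeries

section InverseGamma

lemma one_add_div_add_one_le_rpow {a : ℝ} (ha : 0 ≤ a) {x : ℝ} (hx : 0 < x) :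
    1 + a / (x + 1) ≤ ((x + 1) / x) ^ a := by
  have hlog : 1 / (x + 1) ≤ Real.log ((x + 1) / x) := by
    convert Real.one_sub_inv_le_log_of_pos (show 0 < (x + 1) / x by positivity) using 1
    field_simp
    ring
  rw [Real.rpow_def_of_pos (by positivity)]
  calc 1 + a / (x + 1) ≤ Real.exp (1 / (x + 1) * a) := by
        rw [one_div_mul_eq_div, add_comm]; exact Real.add_one_le_exp _
    _ ≤ Real.exp (Real.log ((x + 1) / x) * a) := by gcongr

lemma GammaSeq_pos {a : ℝ} (ha : 0 < a) {n : ℕ} (hn : 0 < n) : 0 < Real.GammaSeq a n := by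
  unfold Real.GammaSeq
  positivity

lemma monotoneOn_GammaSeq {a : ℝ} (ha : 0 < a) : MonotoneOn (Real.GammaSeq a) (Set.Ici 1) := by
  refine monotoneOn_of_le_succ Set.ordConnected_Ici fun n _ hn _ ↦ ?_
  have hn : (0 : ℝ) < n := by exact_mod_cast Nat.lt_of_lt_of_le one_pos hn
  have hsucc : Real.GammaSeq a (n + 1) =
      Real.GammaSeq a n * (((n + 1) / n) ^ a / (1 + a / (n + 1))) := by
    rw [Real.GammaSeq, Real.GammaSeq, Finset.prod_range_succ _ (n + 1), Nat.factorial_succ,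
      Real.div_rpow (by positivity) hn.le]
    push_cast
    field_simp
    ring
  rw [Order.succ_eq_add_one, hsucc]
  refine le_mul_of_one_le_right (GammaSeq_pos ha (by exact_mod_cast hn)).le ?_
  rw [one_le_div (by positivity)]
  exact one_add_div_add_one_le_rpow ha.le hn

lemma inv_GammaSeq_le {a : ℝ} (ha : 0 ≤ a) {r : ℕ} (hr : 0 < r) :
    (Real.GammaSeq a r)⁻¹ ≤ (r + 1) * Real.exp r * (Real.exp 1 / r) ^ a := by
  have hprod : ∏ i ∈ Finset.range (r + 1), (a + i) ≤ (a + r) ^ (r + 1) := by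
    calc ∏ i ∈ Finset.range (r + 1), (a + i) ≤ ∏ _i ∈ Finset.range (r + 1), (a + r) :=
          Finset.prod_le_prod (fun i _ ↦ by positivity) fun i hi ↦ by
            gcongr; exact Nat.lt_succ_iff.1 (Finset.mem_range.1 hi)
      _ = (a + r) ^ (r + 1) := by simp
  have hexp : (a + r) ^ (r + 1) ≤ (r + 1)! * Real.exp (a + r) := by
    rw [mul_comm, ← div_le_iff₀ (by positivity)]
    exact Real.pow_div_factorial_le_exp _ (by positivity) _
  calc (Real.GammaSeq a r)⁻¹ = (∏ i ∈ Finset.range (r + 1), (a + i)) / (r ^ a * r !) := by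
        rw [Real.GammaSeq, inv_div]
    _ ≤ (r + 1)! * Real.exp (a + r) / (r ^ a * r !) := by gcongr; exact hprod.trans hexp
    _ = (r + 1) * Real.exp r * (Real.exp 1 / r) ^ a := by
        rw [Real.div_rpow (Real.exp_pos 1).le (by positivity), Real.exp_one_rpow, Real.exp_add,
          Nat.factorial_succ]
        push_cast
        field_simp

lemma eventually_summable_inv_GammaSeq_mul_pow {α β : ℝ} (hα : 0 < α) (hβ : 0 ≤ β) (x : ℝ) :
    ∀ᶠ r : ℕ in atTop, Summable fun k : ℕ ↦ (Real.GammaSeq (α * k + β) r)⁻¹ * x ^ k := by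
  have hlim : Tendsto (fun r : ℕ ↦ (Real.exp 1 / r) ^ α * |x|) atTop (𝓝 0) := by
    simpa [hα.ne'] using
      ((tendsto_const_div_atTop_nhds_zero_nat (Real.exp 1)).rpow_const (.inr hα.le)).mul_const |x|
  filter_upwards [hlim.eventually_lt_const one_pos, eventually_gt_atTop 0] with r hlt hr
  have hgeom := (summable_geometric_of_lt_one (by positivity) hlt).mul_left
    ((r + 1) * Real.exp r * (Real.exp 1 / r) ^ β)
  refine .of_norm_bounded hgeom fun k ↦ ?_
  have hnonneg : 0 ≤ (Real.GammaSeq (α * k + β) r)⁻¹ := by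
    unfold Real.GammaSeq; positivity
  calc ‖(Real.GammaSeq (α * k + β) r)⁻¹ * x ^ k‖
      = (Real.GammaSeq (α * k + β) r)⁻¹ * |x| ^ k := by
        rw [norm_mul, norm_pow, Real.norm_of_nonneg hnonneg, Real.norm_eq_abs]
    _ ≤ (r + 1) * Real.exp r * (Real.exp 1 / r) ^ (α * k + β) * |x| ^ k := by
        gcongr; exact inv_GammaSeq_le (by positivity) hr
    _ = (r + 1) * Real.exp r * (Real.exp 1 / r) ^ β * ((Real.exp 1 / r) ^ α * |x|) ^ k := by
        rw [Real.rpow_add (by positivity), Real.rpow_mul_natCast (by positivity), mul_pow]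
        ring

lemma tendsto_inv_GammaSeq {a : ℝ} (ha : 0 < a) :
    Tendsto (fun n ↦ (Real.GammaSeq a n)⁻¹) atTop (𝓝 (Real.Gamma a)⁻¹) :=
  (Real.GammaSeq_tendsto_Gamma a).inv₀ (Real.Gamma_pos_of_pos ha).ne'

lemma inv_GammaSeq_le_inv_GammaSeq {a : ℝ} (ha : 0 < a) {r n : ℕ} (hr : 0 < r) (hrn : r ≤ n) :
    (Real.GammaSeq a n)⁻¹ ≤ (Real.GammaSeq a r)⁻¹ :=
  inv_anti₀ (GammaSeq_pos ha hr) (monotoneOn_GammaSeq ha hr (hr.trans_le hrn) hrn)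

lemma inv_Gamma_le_inv_GammaSeq {a : ℝ} (ha : 0 < a) {r : ℕ} (hr : 0 < r) :
    (Real.Gamma a)⁻¹ ≤ (Real.GammaSeq a r)⁻¹ :=
  le_of_tendsto (tendsto_inv_GammaSeq ha) <|
    (eventually_ge_atTop r).mono fun _ ↦ inv_GammaSeq_le_inv_GammaSeq ha hr

lemma summable_inv_Gamma_mul_pow {α β : ℝ} (hα : 0 < α) (hβ : 0 < β) (x : ℝ) :
    Summable fun k : ℕ ↦ ‖(Real.Gamma (α * k + β))⁻¹‖ * x ^ k := by
  obtain ⟨r, hsum, hr⟩ := ((eventually_summable_inv_GammaSeq_mul_pow hα hβ.le x).and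
    (eventually_gt_atTop 0)).exists
  refine .of_norm_bounded hsum.norm fun k ↦ ?_
  have ha : 0 < α * k + β := by positivity
  rw [norm_mul, norm_norm, norm_mul]
  gcongr ?_ * _
  rw [Real.norm_of_nonneg (inv_nonneg.2 (Real.Gamma_pos_of_pos ha).le)]
  exact (inv_Gamma_le_inv_GammaSeq ha hr).trans (le_abs_self _)

end InverseGamma

section FormalPowerSeries

/-- The formal power series of `(1 - X)⁻ᵃ`, for an exponent `a` in the coefficient ring. It encodes
the binomial weights `multichoose a n` so that adding exponents becomes multiplication. -/
def negBinomialSeries {R : Type*} [CommRing R] [BinomialRing R] (a : R) : R⟦X⟧ :=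
  mk (Ring.multichoose a)

section BinomialRing

variable {R : Type*} [CommRing R] [BinomialRing R]

lemma negBinomialSeries_eq_rescale_binomialSeries (a : R) :
    negBinomialSeries a = rescale (-1) (binomialSeries R (-a)) := by
  ext n
  rw [negBinomialSeries, coeff_mk, coeff_rescale, binomialSeries_coeff, Ring.choose_neg',
    smul_eq_mul, mul_one, Units.smul_def, zsmul_eq_mul, Int.cast_negOnePow_natCast,
    ← mul_assoc, ← mul_pow]
  simp

lemma negBinomialSeries_zero : negBinomialSeries (0 : R) = 1 := by
  simp [negBinomialSeries_eq_rescale_binomialSeries]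

lemma negBinomialSeries_add (a b : R) :
    negBinomialSeries (a + b) = negBinomialSeries a * negBinomialSeries b := by
  simp [negBinomialSeries_eq_rescale_binomialSeries, neg_add_rev, mul_comm]

lemma negBinomialSeries_pow (a : R) (k : ℕ) :
    negBinomialSeries a ^ k = negBinomialSeries (a * k) := by
  induction k with
  | zero => simp [negBinomialSeries_zero]
  | succ k ih => rw [pow_succ, ih, ← negBinomialSeries_add, Nat.cast_succ, mul_add_one]

lemma neg_C_mul_negBinomialSeries_pow (a y : R) (k : ℕ) :
    (-(C y * negBinomialSeries a)) ^ k = C ((-y) ^ k) * negBinomialSeries (a * k) := by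
  rw [← neg_mul, mul_pow, negBinomialSeries_pow, ← map_neg, ← map_pow]

lemma C_mul_hasseDerivCoeff_negBinomialSeries (a b y : R) (j k : ℕ) :
    C ((-y) ^ k) * hasseDerivCoeff j (fun m ↦ negBinomialSeries (a * m + b)) k =
      negBinomialSeries a ^ (j + 1) * negBinomialSeries (b - a) *
        (((k + j).choose j : R⟦X⟧) * (-(C y * negBinomialSeries a)) ^ k) := by
  rw [neg_C_mul_negBinomialSeries_pow, hasseDerivCoeff, negBinomialSeries_pow,
    show a * (k + j : ℕ) + b = a * (j + 1 : ℕ) + (b - a) + a * k by push_cast; ring,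
    negBinomialSeries_add, negBinomialSeries_add]
  ring

end BinomialRing

section Field

variable {K : Type*} [Field K] [CharZero K]

lemma natCast_choose_eq_ascPochhammer_div (k j : ℕ) :
    ((k + j).choose j : K) = (ascPochhammer K j).eval ((k : K) + 1) / j ! := by
  rw [eq_div_iff (by exact_mod_cast j.factorial_ne_zero), mul_comm, ← Nat.cast_mul,
    ← Nat.ascFactorial_eq_factorial_mul_choose, Nat.cast_ascFactorial, Nat.cast_succ]

variable [BinomialRing K]

lemma multichoose_eq_ascPochhammer_div (a : K) (n : ℕ) :
    Ring.multichoose a n = (ascPochhammer K n).eval a / n ! := by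
  rw [eq_div_iff (by exact_mod_cast n.factorial_ne_zero),
    ← Polynomial.ascPochhammer_smeval_eq_eval,
    ← Ring.factorial_nsmul_multichoose_eq_ascPochhammer, nsmul_eq_mul, mul_comm]

lemma multichoose_eq_prod_div (a : K) (n : ℕ) :
    Ring.multichoose a n = (∏ i ∈ Finset.range n, (a + i)) / n ! := by
  rw [multichoose_eq_ascPochhammer_div]
  congr 1
  induction n with
  | zero => simp
  | succ n ih => rw [ascPochhammer_succ_eval, ih, Finset.prod_range_succ]

end Field

section OrderedField

variable {K : Type*} [Field K] [LinearOrder K] [IsStrictOrderedRing K] [BinomialRing K]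

lemma multichoose_nonneg {a : K} (ha : 0 ≤ a) (n : ℕ) : 0 ≤ Ring.multichoose a n := by
  rw [multichoose_eq_prod_div]
  positivity

lemma multichoose_neg_succ_nonpos {a : K} (ha₀ : 0 ≤ a) (ha₁ : a ≤ 1) (n : ℕ) :
    Ring.multichoose (-a) (n + 1) ≤ 0 := by
  rw [multichoose_eq_prod_div, Finset.prod_range_succ', Nat.cast_zero, add_zero]
  refine div_nonpos_of_nonpos_of_nonneg (mul_nonpos_of_nonneg_of_nonpos ?_ (by linarith))
    (by positivity)
  refine Finset.prod_nonneg fun i _ ↦ ?_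
  push_cast
  linarith [(Nat.cast_nonneg i : (0 : K) ≤ i)]

end OrderedField

section OrderedRing

variable {R : Type*} [Ring R] [LinearOrder R] [IsStrictOrderedRing R] {f g : R⟦X⟧}

lemma coeff_nonneg_of_mul (hf₀ : 0 < coeff 0 f) (hf : ∀ n, coeff (n + 1) f ≤ 0)
    (hfg : ∀ n, 0 ≤ coeff n (f * g)) (n : ℕ) : 0 ≤ coeff n g := by
  induction n using Nat.strong_induction_on with
  | _ n ih =>
    have hrest : ∑ p ∈ (antidiagonal n).erase (0, n), coeff p.1 f * coeff p.2 g ≤ 0 := by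
      refine Finset.sum_nonpos fun ⟨i, l⟩ hp ↦ ?_
      obtain ⟨hne, hil⟩ := Finset.mem_erase.1 hp
      rw [Finset.HasAntidiagonal.mem_antidiagonal] at hil
      obtain _ | i := i
      · simp_all
      · exact mul_nonpos_of_nonpos_of_nonneg (hf i) (ih l (by omega))
    have hsplit : coeff 0 f * coeff n g +
        ∑ p ∈ (antidiagonal n).erase (0, n), coeff p.1 f * coeff p.2 g =
          coeff n (f * g) := by
      rw [coeff_mul]
      exact Finset.add_sum_erase _ (a := (0, n)) (fun p ↦ coeff p.1 f * coeff p.2 g)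
        (Finset.HasAntidiagonal.mem_antidiagonal.2 (zero_add n))
    refine nonneg_of_mul_nonneg_right ((hfg n).trans ?_) hf₀
    exact hsplit.symm.trans_le (add_le_of_nonpos_right hrest)

lemma coeff_nonneg_of_pow_mul (hf₀ : 0 < coeff 0 f) (hf : ∀ n, coeff (n + 1) f ≤ 0) {j : ℕ}
    (hfg : ∀ n, 0 ≤ coeff n (f ^ j * g)) : ∀ n, 0 ≤ coeff n g := by
  induction j with
  | zero => simpa using hfg
  | succ j ih =>
    exact ih (coeff_nonneg_of_mul hf₀ hf (by simpa only [pow_succ', mul_assoc] using hfg))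

end OrderedRing

lemma one_sub_pow_mul_tsum_choose_mul_pow {R : Type*} [Ring R] [TopologicalSpace R]
    [IsTopologicalRing R] [T2Space R] {t : R}
    (ht : ∀ j : ℕ, Summable fun k ↦ ((k + j).choose j : R) * t ^ k) (j : ℕ) :
    (1 - t) ^ (j + 1) * ∑' k, ((k + j).choose j : R) * t ^ k = 1 := by
  induction j with
  | zero => simpa using Summable.one_sub_mul_tsum_pow (by simpa using ht 0)
  | succ j ih =>
    have hpascal (k : ℕ) : ((k + 1 + (j + 1)).choose (j + 1) : R) * t ^ (k + 1) =
        ((k + 1 + j).choose j : R) * t ^ (k + 1) +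
          t * (((k + (j + 1)).choose (j + 1) : R) * t ^ k) := by
      rw [show k + 1 + (j + 1) = k + 1 + j + 1 by ring, Nat.choose_succ_succ',
        show k + (j + 1) = k + 1 + j by ring, Nat.cast_add, add_mul, pow_succ',
        (Nat.cast_commute ((k + 1 + j).choose (j + 1)) t).left_comm]
    have hsucc : (1 - t) * ∑' k, ((k + (j + 1)).choose (j + 1) : R) * t ^ k =
        ∑' k, ((k + j).choose j : R) * t ^ k := by
      rw [sub_mul, one_mul, sub_eq_iff_eq_add, ← (ht (j + 1)).tsum_mul_left,
        (ht j).tsum_eq_zero_add, add_assoc,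
        ← Summable.tsum_add ((summable_nat_add_iff 1).2 (ht j)) ((ht (j + 1)).mul_left t),
        (ht (j + 1)).tsum_eq_zero_add]
      simp [hpascal]
    rw [pow_succ, mul_assoc, hsucc, ih]

lemma summable_eval_natCast_mul_geometric {R : Type*} [NormedCommRing R] [HasSummableGeomSeries R]
    (p : Polynomial R) {r : R} (hr : ‖r‖ < 1) : Summable fun k : ℕ ↦ p.eval (k : R) * r ^ k := by
  induction p using Polynomial.induction_on' with
  | add p q hp hq => simpa only [Polynomial.eval_add, add_mul] using hp.add hq
  | monomial n a =>
    simpa only [Polynomial.eval_monomial, mul_assoc] using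
      (summable_pow_mul_geometric_of_norm_lt_one n hr).mul_left a

open scoped PowerSeries.WithPiTopology

section NormedField

variable {K : Type*} [NormedField K] [CharZero K] [BinomialRing K]

lemma summable_choose_mul_neg_C_mul_negBinomialSeries_pow (a : K) {y : K} (hy : ‖y‖ < 1) (j : ℕ) :
    Summable fun k ↦ ((k + j).choose j : K⟦X⟧) * (-(C y * negBinomialSeries a)) ^ k := by
  rw [WithPiTopology.summable_iff_summable_coeff]
  intro n
  have hsum := summable_eval_natCast_mul_geometric (((ascPochhammer K j).comp (.X + 1)) *
    ((ascPochhammer K n).comp (.C a * .X))) (r := -y) (by rwa [norm_neg])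
  refine (hsum.div_const ((j ! : K) * n !)).congr fun k ↦ ?_
  rw [neg_C_mul_negBinomialSeries_pow, ← map_natCast (C (R := K)), coeff_C_mul, coeff_C_mul,
    negBinomialSeries, coeff_mk, multichoose_eq_ascPochhammer_div,
    natCast_choose_eq_ascPochhammer_div]
  simp only [Polynomial.eval_mul, Polynomial.eval_comp, Polynomial.eval_add, Polynomial.eval_X,
    Polynomial.eval_one, Polynomial.eval_C]
  ring

lemma exists_hasSum_C_mul_hasseDerivCoeff_negBinomialSeries (a b : K) {y : K} (hy : ‖y‖ < 1)
    (j : ℕ) :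
    ∃ g, (C y + negBinomialSeries (-a)) ^ (j + 1) * g = negBinomialSeries (b - a) ∧ HasSum
      (fun k ↦ C ((-y) ^ k) * hasseDerivCoeff j (fun m ↦ negBinomialSeries (a * m + b)) k) g := by
  have ht := summable_choose_mul_neg_C_mul_negBinomialSeries_pow a hy
  refine ⟨_, ?_, by
    simpa only [C_mul_hasseDerivCoeff_negBinomialSeries] using (ht j).hasSum.mul_left _⟩
  have hbase : (C y + negBinomialSeries (-a)) * negBinomialSeries a =
      1 - -(C y * negBinomialSeries a) := by
    rw [add_mul, ← negBinomialSeries_add, neg_add_cancel, negBinomialSeries_zero, sub_neg_eq_add,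
      add_comm]
  rw [← mul_assoc, ← mul_assoc, ← mul_pow, hbase, mul_right_comm,
    one_sub_pow_mul_tsum_choose_mul_pow ht, one_mul]

end NormedField

lemma tsum_hasseDerivCoeff_multichoose_nonneg {α β y : ℝ} (hα₀ : 0 ≤ α) (hα₁ : α ≤ 1)
    (hαβ : α ≤ β) (hy₀ : 0 ≤ y) (hy₁ : y < 1) (j n : ℕ) :
    0 ≤ ∑' k, hasseDerivCoeff j (fun m ↦ Ring.multichoose (α * m + β) n) k * (-y) ^ k := by
  obtain ⟨g, hmul, hsum⟩ := exists_hasSum_C_mul_hasseDerivCoeff_negBinomialSeries α β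
    (by rwa [Real.norm_of_nonneg hy₀]) j
  have hconst : 0 < coeff 0 (C y + negBinomialSeries (-α)) := by
    rw [map_add, coeff_zero_C, negBinomialSeries, coeff_mk, Ring.multichoose_zero_right]
    positivity
  have hneg (n : ℕ) : coeff (n + 1) (C y + negBinomialSeries (-α)) ≤ 0 := by
    simpa [negBinomialSeries, coeff_C] using multichoose_neg_succ_nonpos hα₀ hα₁ n
  have hcoeff (k : ℕ) :
      coeff n (C ((-y) ^ k) * hasseDerivCoeff j (fun m ↦ negBinomialSeries (α * m + β)) k) =
        hasseDerivCoeff j (fun m ↦ Ring.multichoose (α * m + β) n) k * (-y) ^ k := by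
    rw [coeff_C_mul, hasseDerivCoeff, hasseDerivCoeff, ← map_natCast (C (R := ℝ)), coeff_C_mul,
      negBinomialSeries, coeff_mk, mul_comm]
  have hsumn := (WithPiTopology.hasSum_iff_hasSum_coeff ℝ).1 hsum n
  simp only [hcoeff] at hsumn
  rw [hsumn.tsum_eq]
  refine coeff_nonneg_of_pow_mul (j := j + 1) hconst hneg (fun n ↦ ?_) n
  rw [hmul, negBinomialSeries, coeff_mk]
  exact multichoose_nonneg (sub_nonneg.2 hαβ) n

end FormalPowerSeries

section MittagLeffler

/-- The two-parameter Mittag-Leffler function `E_{α,β}` of a real argument. It is meant for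
`α, β > 0`, where no term meets a pole of `Γ` (at which `Real.Gamma` is `0`). -/
noncomputable def mittagLeffler (α β x : ℝ) : ℝ :=
  ∑' k : ℕ, (Real.Gamma (α * k + β))⁻¹ * x ^ k

lemma contDiff_mittagLeffler {α β : ℝ} (hα : 0 < α) (hβ : 0 < β) :
    ContDiff ℝ (⊤ : ℕ∞) (mittagLeffler α β) :=
  contDiff_tsum_mul_pow (summable_inv_Gamma_mul_pow hα hβ)

lemma inv_GammaSeq_eq (a : ℝ) (n : ℕ) :
    (Real.GammaSeq a n)⁻¹ = (n + 1) * Ring.multichoose a (n + 1) / n ^ a := by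
  rw [Real.GammaSeq, inv_div, multichoose_eq_prod_div, Nat.factorial_succ]
  push_cast
  field_simp

lemma tsum_hasseDerivCoeff_inv_GammaSeq_nonneg {α β x : ℝ} (hα₀ : 0 ≤ α) (hα₁ : α ≤ 1)
    (hαβ : α ≤ β) (hx : 0 ≤ x) (j : ℕ) {n : ℕ} (hn : 0 < n) (hxn : x < n ^ α) :
    0 ≤ ∑' k, hasseDerivCoeff j (fun m ↦ (Real.GammaSeq (α * m + β) n)⁻¹) k * (-x) ^ k := by
  replace hn : (0 : ℝ) < n := by exact_mod_cast hn
  have hrescale (k : ℕ) :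
      hasseDerivCoeff j (fun m ↦ (Real.GammaSeq (α * m + β) n)⁻¹) k * (-x) ^ k =
        (n + 1) / n ^ (α * j + β) *
          (hasseDerivCoeff j (fun m ↦ Ring.multichoose (α * m + β) (n + 1)) k *
            (-(x / n ^ α)) ^ k) := by
    have hpow : (n : ℝ) ^ (α * (k + j : ℕ) + β) = (n ^ α) ^ k * n ^ (α * j + β) := by
      rw [← Real.rpow_mul_natCast hn.le, ← Real.rpow_add hn]
      push_cast
      ring_nf
    rw [hasseDerivCoeff, hasseDerivCoeff, inv_GammaSeq_eq, hpow, ← neg_div, div_pow]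
    field_simp
  simp only [hrescale, tsum_mul_left]
  refine mul_nonneg (by positivity) ?_
  exact tsum_hasseDerivCoeff_multichoose_nonneg hα₀ hα₁ hαβ (by positivity)
    ((div_lt_one (by positivity)).2 hxn) j (n + 1)

lemma tsum_hasseDerivCoeff_inv_Gamma_nonneg {α β x : ℝ} (hα₀ : 0 < α) (hα₁ : α ≤ 1)
    (hαβ : α ≤ β) (hx : 0 ≤ x) (j : ℕ) :
    0 ≤ ∑' k, hasseDerivCoeff j (fun m ↦ (Real.Gamma (α * m + β))⁻¹) k * (-x) ^ k := by
  have hβ : 0 < β := hα₀.trans_le hαβ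
  have ha (k : ℕ) : 0 < α * k + β := by positivity
  obtain ⟨r, hsum, hr⟩ := ((eventually_summable_inv_GammaSeq_mul_pow hα₀ hβ.le
    (2 * (‖-x‖ + 1))).and (eventually_gt_atTop 0)).exists
  have hsum_norm : Summable fun k : ℕ ↦
      ‖(Real.GammaSeq (α * k + β) r)⁻¹‖ * (2 * (‖-x‖ + 1)) ^ k :=
    hsum.congr fun k ↦ by rw [Real.norm_of_nonneg (inv_pos.2 (GammaSeq_pos (ha k) hr)).le]
  have hlim := tendsto_tsum_hasseDerivCoeff_mul_pow
    (C := fun n k ↦ (Real.GammaSeq (α * k + β) n)⁻¹) hsum_norm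
    (fun k ↦ tendsto_inv_GammaSeq (ha k)) ((eventually_ge_atTop r).mono fun n hn k ↦ by
      rw [Real.norm_of_nonneg (inv_pos.2 (GammaSeq_pos (ha k) (hr.trans_le hn))).le]
      exact inv_GammaSeq_le_inv_GammaSeq (ha k) hr hn) j
  refine ge_of_tendsto hlim ?_
  have hpow : Tendsto (fun n : ℕ ↦ (n : ℝ) ^ α) atTop atTop :=
    (tendsto_rpow_atTop hα₀).comp tendsto_natCast_atTop_atTop
  filter_upwards [hpow.eventually_gt_atTop x, eventually_gt_atTop 0] with n hxn hn
  exact tsum_hasseDerivCoeff_inv_GammaSeq_nonneg hα₀.le hα₁ hαβ hx j hn hxn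

lemma iteratedDeriv_mittagLeffler_neg_nonneg {α β x : ℝ} (hα₀ : 0 < α) (hα₁ : α ≤ 1)
    (hαβ : α ≤ β) (hx : 0 ≤ x) (j : ℕ) : 0 ≤ iteratedDeriv j (mittagLeffler α β) (-x) := by
  unfold mittagLeffler
  rw [iteratedDeriv_tsum_mul_pow (summable_inv_Gamma_mul_pow hα₀ (hα₀.trans_le hαβ))]
  exact mul_nonneg (by positivity) (tsum_hasseDerivCoeff_inv_Gamma_nonneg hα₀ hα₁ hαβ hx j)

end MittagLeffler

/-- Complete monotonicity of `E_{α,β}(-x)` on `(0,∞)` for `0 < α ≤ 1`, `β ≥ α`. -/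
theorem mittagLeffler_completely_monotone
    (α β : ℝ) (hα0 : 0 < α) (hα1 : α ≤ 1) (hβ : α ≤ β)
    (f : ℝ → ℝ) (hf : f = fun x => ∑' k : ℕ, (-x) ^ k / Real.Gamma (α * k + β)) :
    ContDiffOn ℝ (⊤ : ℕ∞) f (Set.Ioi 0) ∧
      ∀ j : ℕ, ∀ x : ℝ, 0 < x → 0 ≤ (-1 : ℝ) ^ j * iteratedDeriv j f x := by
  have hfE : f = fun x ↦ mittagLeffler α β (-x) := by
    simp only [hf, mittagLeffler, div_eq_inv_mul]
  subst hfE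
  refine ⟨?_, fun j x hx ↦ ?_⟩
  · exact ((contDiff_mittagLeffler hα0 (hα0.trans_le hβ)).comp contDiff_neg).contDiffOn
  · rw [iteratedDeriv_comp_neg, smul_eq_mul, ← mul_assoc, pow_mul_pow_eq_one j (by norm_num),
      one_mul]
    exact iteratedDeriv_mittagLeffler_neg_nonneg hα0 hα1 hβ hx.le j
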